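/- Let U = {a ∈ A_n : a a* = 1} and U₀ = {b ∈ U : the constant coefficient of b equals 1}. Then the map (λ, u) ↦ λ·u is a group isomorphism from N_{K/k}^{−1}(1) × U₀ onto U, where N_{K/k}^{−1}(1) = {λ ∈ K : λ λ̄ = 1} is the group of norm-one elements of K. -/

import Mathlib

open Polynomial Matrix

noncomputable section

abbrev TruncPoly (K : Type) [CommRing K] (n : ℕ) := AdjoinRoot (X ^ n : K[X])

def trStar (K : Type) [CommRing K] (σ : K →+* K) (n : ℕ) :
    TruncPoly K n →+* TruncPoly K n :=
  AdjoinRoot.lift ((AdjoinRoot.of _).comp σ) (-(AdjoinRoot.root _)) (by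
    have h : (AdjoinRoot.root (X ^ n : K[X])) ^ n = 0 := by
      rw [← AdjoinRoot.mk_X, ← map_pow, AdjoinRoot.mk_self]
    rw [eval₂_pow, eval₂_X, neg_pow, h, mul_zero])


/-- The `i`-th coefficient of an element of `K[x]/(x^n)`. -/
def trCoeff (K : Type) [CommRing K] (n : ℕ) (a : TruncPoly K n) (i : ℕ) : K :=
  (AdjoinRoot.modByMonicHom (monic_X_pow n) a).coeff i

/-- The group `{a ∈ A_n : a·a* = 1}` (as a submonoid of `A_n`). -/
def normOneGroup (K : Type) [Field K] (σ : K →+* K) (n : ℕ) :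
    Submonoid (TruncPoly K n) where
  carrier := {a | a * trStar K σ n a = 1}
  one_mem' := by simp
  mul_mem' := by
    intro a b ha hb
    have ha' : a * trStar K σ n a = 1 := ha
    have hb' : b * trStar K σ n b = 1 := hb
    show a * b * trStar K σ n (a * b) = 1
    rw [_root_.map_mul]
    calc a * b * (trStar K σ n a * trStar K σ n b)
        = (a * trStar K σ n a) * (b * trStar K σ n b) := by ring
      _ = 1 := by rw [ha', hb', one_mul]

/-- The group `N_{K/k}⁻¹(1) = {λ ∈ K : λ·σ(λ) = 1}` of norm-one elements of `K`. -/
def normOneK (K : Type) [Field K] (σ : K →+* K) : Submonoid K where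
  carrier := {lam | lam * σ lam = 1}
  one_mem' := by simp
  mul_mem' := by
    intro a b ha hb
    have ha' : a * σ a = 1 := ha
    have hb' : b * σ b = 1 := hb
    show a * b * σ (a * b) = 1
    rw [_root_.map_mul]
    calc a * b * (σ a * σ b) = (a * σ a) * (b * σ b) := by ring
      _ = 1 := by rw [ha', hb', one_mul]

/-- The subgroup `U₀ = {a ∈ A_n : a·a* = 1, a₀ = 1}` of elements of the unitary
group whose constant coefficient is `1`. -/
def normOneGroupConstOne (K : Type) [Field K] (σ : K →+* K) (n : ℕ) (hn : 0 < n) :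
    Submonoid (TruncPoly K n) where
  carrier := {a | a * trStar K σ n a = 1 ∧ trCoeff K n a 0 = 1}
  one_mem' := by
    constructor
    · simp
    · show (AdjoinRoot.modByMonicHom (monic_X_pow n) 1).coeff 0 = 1
      rw [← map_one (AdjoinRoot.mk (X ^ n : K[X])), AdjoinRoot.modByMonicHom_mk,
        Polynomial.modByMonic_eq_sub_mul_div,
        Polynomial.coeff_zero_eq_eval_zero]
      simp [zero_pow hn.ne']
  mul_mem' := by
    rintro a b ⟨ha1, ha2⟩ ⟨hb1, hb2⟩
    constructor
    · show a * b * trStar K σ n (a * b) = 1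
      rw [_root_.map_mul]
      calc a * b * (trStar K σ n a * trStar K σ n b)
          = (a * trStar K σ n a) * (b * trStar K σ n b) := by ring
        _ = 1 := by rw [ha1, hb1, one_mul]
    · have key : ∀ h : K[X], (h %ₘ (X ^ n : K[X])).coeff 0 = h.coeff 0 := by
        intro h
        rw [Polynomial.modByMonic_eq_sub_mul_div,
          Polynomial.coeff_zero_eq_eval_zero, Polynomial.coeff_zero_eq_eval_zero]
        simp [zero_pow hn.ne']
      obtain ⟨f, rfl⟩ := AdjoinRoot.mk_surjective a
      obtain ⟨g, rfl⟩ := AdjoinRoot.mk_surjective b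
      have hcf : ∀ f : K[X], trCoeff K n (AdjoinRoot.mk _ f) 0 = f.coeff 0 := by
        intro f
        show (AdjoinRoot.modByMonicHom (monic_X_pow n) (AdjoinRoot.mk _ f)).coeff 0 = _
        rw [AdjoinRoot.modByMonicHom_mk, key]
      rw [hcf] at ha2 hb2
      rw [← _root_.map_mul, hcf, Polynomial.mul_coeff_zero, ha2, hb2, one_mul]

/-- The ring homomorphism `K[x]/(x^n) → K` taking the constant coefficient. -/
def trConst (K : Type) [Field K] (n : ℕ) (hn : 0 < n) : TruncPoly K n →+* K :=
  AdjoinRoot.lift (RingHom.id K) 0 (by simp [zero_pow hn.ne'])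

theorem trConst_of (K : Type) [Field K] (n : ℕ) (hn : 0 < n) (c : K) :
    trConst K n hn (AdjoinRoot.of _ c) = c := by
  simp [trConst]

theorem trCoeff_zero_eq_trConst (K : Type) [Field K] (n : ℕ) (hn : 0 < n)
    (a : TruncPoly K n) : trCoeff K n a 0 = trConst K n hn a := by
  obtain ⟨f, rfl⟩ := AdjoinRoot.mk_surjective a
  rw [trCoeff, AdjoinRoot.modByMonicHom_mk, Polynomial.modByMonic_eq_sub_mul_div,
    Polynomial.coeff_zero_eq_eval_zero, trConst, AdjoinRoot.lift_mk]
  simp [zero_pow hn.ne', Polynomial.coeff_zero_eq_eval_zero]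

theorem trStar_of (K : Type) [CommRing K] (σ : K →+* K) (n : ℕ) (c : K) :
    trStar K σ n (AdjoinRoot.of _ c) = AdjoinRoot.of _ (σ c) := by
  simp [trStar]

theorem trConst_trStar (K : Type) [Field K] (σ : K →+* K) (n : ℕ) (hn : 0 < n)
    (a : TruncPoly K n) : trConst K n hn (trStar K σ n a) = σ (trConst K n hn a) := by
  have h : (trConst K n hn).comp (trStar K σ n) = σ.comp (trConst K n hn) := by
    apply AdjoinRoot.ringHom_ext
    · ext c
      simp [trStar_of, trConst_of]
    · simp [trConst, trStar]
  exact RingHom.congr_fun h a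

theorem of_mem_normOneGroup {K : Type} [Field K] {σ : K →+* K} (n : ℕ) {c : K}
    (hc : c ∈ normOneK K σ) : AdjoinRoot.of (X ^ n : K[X]) c ∈ normOneGroup K σ n := by
  change _ * trStar K σ n _ = 1
  rw [trStar_of, ← _root_.map_mul, show c * σ c = 1 from hc, map_one]

theorem map_mem_normOneK {K : Type} [Field K] {σ : K →+* K} {c : K}
    (hc : c ∈ normOneK K σ) : σ c ∈ normOneK K σ := by
  change σ c * σ (σ c) = 1
  rw [← _root_.map_mul, show c * σ c = 1 from hc, map_one]

theorem trConst_mem_normOneK {K : Type} [Field K] {σ : K →+* K} {n : ℕ} (hn : 0 < n)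
    {a : TruncPoly K n} (ha : a ∈ normOneGroup K σ n) :
    trConst K n hn a ∈ normOneK K σ := by
  change _ * σ _ = 1
  rw [← trConst_trStar, ← _root_.map_mul, show a * trStar K σ n a = 1 from ha, map_one]

theorem of_map_trConst_mul_mem {K : Type} [Field K] {σ : K →+* K} {n : ℕ} (hn : 0 < n)
    {a : TruncPoly K n} (ha : a ∈ normOneGroup K σ n) :
    AdjoinRoot.of (X ^ n : K[X]) (σ (trConst K n hn a)) * a ∈
      normOneGroupConstOne K σ n hn := by
  have hc := trConst_mem_normOneK hn ha
  refine ⟨mul_mem (of_mem_normOneGroup n (map_mem_normOneK hc)) ha, ?_⟩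
  rw [trCoeff_zero_eq_trConst K n hn, _root_.map_mul, trConst_of, mul_comm]
  exact hc

/-- Multiplication `(λ, u) ↦ λ·u` as an isomorphism from `N_{K/k}⁻¹(1) × U₀` onto `U`. -/
def normOneEquiv (K : Type) [Field K] (σ : K →+* K) (n : ℕ) (hn : 0 < n) :
    normOneK K σ × normOneGroupConstOne K σ n hn ≃* normOneGroup K σ n where
  toFun x := ⟨AdjoinRoot.of (X ^ n : K[X]) x.1 * x.2,
    mul_mem (of_mem_normOneGroup n x.1.2) x.2.2.1⟩
  invFun a := (⟨trConst K n hn a, trConst_mem_normOneK hn a.2⟩,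
    ⟨AdjoinRoot.of (X ^ n : K[X]) (σ (trConst K n hn a)) * a, of_map_trConst_mul_mem hn a.2⟩)
  left_inv := by
    rintro ⟨⟨c, hc⟩, ⟨u, hu⟩⟩
    have hcu : trConst K n hn (AdjoinRoot.of (X ^ n : K[X]) c * u) = c := by
      rw [_root_.map_mul, trConst_of, ← trCoeff_zero_eq_trConst, hu.2, mul_one]
    ext
    · exact hcu
    · change AdjoinRoot.of (X ^ n : K[X]) (σ (trConst K n hn _)) * (_ * u) = u
      rw [hcu, ← mul_assoc, ← _root_.map_mul, mul_comm (σ c), show c * σ c = 1 from hc,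
        map_one, one_mul]
  right_inv := by
    rintro ⟨a, ha⟩
    ext
    change AdjoinRoot.of (X ^ n : K[X]) (trConst K n hn a) *
      (AdjoinRoot.of (X ^ n : K[X]) (σ (trConst K n hn a)) * a) = a
    rw [← mul_assoc, ← _root_.map_mul,
      show trConst K n hn a * σ (trConst K n hn a) = 1 from trConst_mem_normOneK hn ha,
      map_one, one_mul]
  map_mul' x y := by
    ext
    change AdjoinRoot.of (X ^ n : K[X]) (x.1 * y.1 : K) * (x.2 * y.2 : TruncPoly K n) =
      (_ * _) * (_ * _)
    rw [_root_.map_mul, mul_mul_mul_comm]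

/-- `(λ, u) ↦ λ·u` is a group isomorphism
`N_{K/k}⁻¹(1) × U₀ ≃ U = {a ∈ A_n : a·a* = 1}`. -/
theorem normOne_decomposition
    (p t q : ℕ) (hp : p.Prime) (hp2 : Odd p) (ht : 0 < t) (hq : q = p ^ t)
    (k K : Type) [Field k] [Fintype k] [Field K] [Fintype K] [Algebra k K]
    (hcardk : Fintype.card k = q) (hcardK : Fintype.card K = q ^ 2)
    (Δ : K) (hΔ : Δ ∉ Set.range (algebraMap k K))
    (hΔ2 : Δ ^ 2 ∈ Set.range (algebraMap k K))
    (σ : K →+* K) (hσk : ∀ c : k, σ (algebraMap k K c) = algebraMap k K c)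
    (hσne : σ ≠ RingHom.id K) (hσΔ : σ Δ = -Δ)
    (n : ℕ) (hn : 0 < n) :
    ∃ e : normOneK K σ × normOneGroupConstOne K σ n hn ≃* normOneGroup K σ n,
      ∀ x : normOneK K σ × normOneGroupConstOne K σ n hn,
        (e x : TruncPoly K n) = AdjoinRoot.of (X ^ n : K[X]) ↑x.1 * (↑x.2 : TruncPoly K n) :=
  ⟨normOneEquiv K σ n hn, fun _ => rfl⟩
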